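/- Suppose K'(φ) ≤ 0 for all φ ∈ [0,Φ_F], the initial datum Q_init satisfies Assumption (A2), and H_init(η) := Q_init'(η) − K(Q_init(η)) > 0 for all η ∈ [0,1]. Then there exists a unique global classical solution (Q,N) of the Q-system on [0,∞), and for all τ ≥ 0: 0 < 1/(max_{η∈[0,1]} H_init(η)) ≤ N(τ) ≤ 1/(min_{η∈[0,1]} H_init(η)) < ∞. -/

import Mathlib

open Real Set MeasureTheory Filter Topology
open scoped ENNReal

noncomputable section

/-- The time interval `[0, T)` in `ℝ`, where `T : ℝ≥0∞` may be `∞`. -/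
def Ico0 (T : ℝ≥0∞) : Set ℝ := {τ : ℝ | 0 ≤ τ ∧ ENNReal.ofReal τ < T}

/-- Partial derivative in the time variable (one-sided at `τ = 0`). -/
def pdTau (Q : ℝ → ℝ → ℝ) (τ η : ℝ) : ℝ := derivWithin (fun s => Q s η) (Ici 0) τ

/-- Partial derivative in the spatial variable (one-sided at `η = 0` and `η = 1`). -/
def pdEta (Q : ℝ → ℝ → ℝ) (τ η : ℝ) : ℝ := derivWithin (fun x => Q τ x) (Icc 0 1) η

/-- Assumption 1.1: `K ∈ C²(ℝ)` with `K'`, `K''` bounded on `ℝ` and `K > 0` on `[0, Φ_F]`. -/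
structure KAssump (K : ℝ → ℝ) (ΦF : ℝ) : Prop where
  smooth : ContDiff ℝ 2 K
  bdd1 : ∃ C : ℝ, ∀ x : ℝ, |deriv K x| ≤ C
  bdd2 : ∃ C : ℝ, ∀ x : ℝ, |deriv (deriv K) x| ≤ C
  pos : ∀ φ ∈ Icc (0 : ℝ) ΦF, 0 < K φ

/-- `k_min := K'(0) + ∫₀^{Φ_F} min(K''(φ), 0) dφ`. -/
def kmin (K : ℝ → ℝ) (ΦF : ℝ) : ℝ :=
  deriv K 0 + ∫ φ in (0 : ℝ)..ΦF, min (deriv (deriv K) φ) 0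

/-- `k_max := K'(0) + ∫₀^{Φ_F} max(K''(φ), 0) dφ`. -/
def kmax (K : ℝ → ℝ) (ΦF : ℝ) : ℝ :=
  deriv K 0 + ∫ φ in (0 : ℝ)..ΦF, max (deriv (deriv K) φ) 0

/-- Assumption (A2) on the initial datum. -/
structure A2 (K : ℝ → ℝ) (ΦF : ℝ) (Qinit : ℝ → ℝ) : Prop where
  reg : ContDiffOn ℝ 1 Qinit (Icc 0 1)
  mono : MonotoneOn Qinit (Icc 0 1)
  init0 : Qinit 0 = 0
  init1 : Qinit 1 = ΦF
  deriv1 : K ΦF < derivWithin Qinit (Icc 0 1) 1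
  compat : derivWithin Qinit (Icc 0 1) 1 - derivWithin Qinit (Icc 0 1) 0 = K ΦF - K 0

/-- A classical solution `(Q, N)` of the Q-system on `[0, T)` with initial datum `Qinit`. -/
structure IsQSol (K : ℝ → ℝ) (ΦF : ℝ) (T : ℝ≥0∞) (Qinit : ℝ → ℝ)
    (Q : ℝ → ℝ → ℝ) (N : ℝ → ℝ) : Prop where
  initReg : ContDiffOn ℝ 1 Qinit (Icc 0 1)
  initMono : MonotoneOn Qinit (Icc 0 1)
  init0 : Qinit 0 = 0
  init1 : Qinit 1 = ΦF
  initDeriv : K ΦF < derivWithin Qinit (Icc 0 1) 1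
  reg : ContDiffOn ℝ 1 (Function.uncurry Q) (Ico0 T ×ˢ Icc (0 : ℝ) 1)
  mono : ∀ τ ∈ Ico0 T, MonotoneOn (Q τ) (Icc 0 1)
  Ncont : ContinuousOn N (Ico0 T)
  Npos : ∀ τ ∈ Ico0 T, 0 < N τ
  pde : ∀ τ ∈ Ico0 T, ∀ η ∈ Ioo (0 : ℝ) 1,
    pdTau Q τ η + pdEta Q τ η = 1 / N τ + K (Q τ η)
  bc : ∀ τ ∈ Ico0 T, Q τ 0 = 0
  Ndef : ∀ τ ∈ Ico0 T, 1 / N τ = pdEta Q τ 1 - K ΦF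
  init : ∀ η ∈ Icc (0 : ℝ) 1, Q 0 η = Qinit η
  constraint : ∀ τ ∈ Ico0 T, K ΦF < pdEta Q τ 1

/-- A classical solution `(Q, Ñ)` of the relaxed system on `[0, T)` with initial datum `Qinit`,
where `Ñ` is unconstrained in sign. -/
structure IsRelaxedSol (K : ℝ → ℝ) (ΦF : ℝ) (T : ℝ≥0∞) (Qinit : ℝ → ℝ)
    (Q : ℝ → ℝ → ℝ) (Ntil : ℝ → ℝ) : Prop where
  initReg : ContDiffOn ℝ 1 Qinit (Icc 0 1)
  init0 : Qinit 0 = 0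
  init1 : Qinit 1 = ΦF
  reg : ContDiffOn ℝ 1 (Function.uncurry Q) (Ico0 T ×ˢ Icc (0 : ℝ) 1)
  Ncont : ContinuousOn Ntil (Ico0 T)
  pde : ∀ τ ∈ Ico0 T, ∀ η ∈ Ioo (0 : ℝ) 1,
    pdTau Q τ η + pdEta Q τ η = Ntil τ + K (Q τ η)
  bc : ∀ τ ∈ Ico0 T, Q τ 0 = 0
  Ndef : ∀ τ ∈ Ico0 T, Ntil τ = pdEta Q τ 1 - K ΦF
  init : ∀ η ∈ Icc (0 : ℝ) 1, Q 0 η = Qinit η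

/-- A steady state `(Q*, N*)` of the Q-system. -/
def IsSteadyState (K : ℝ → ℝ) (ΦF : ℝ) (Qs : ℝ → ℝ) (Ns : ℝ) : Prop :=
  ContDiffOn ℝ 1 Qs (Icc 0 1) ∧ 0 < Ns ∧
    (∀ η ∈ Icc (0 : ℝ) 1, derivWithin Qs (Icc 0 1) η = K (Qs η) + 1 / Ns) ∧
    Qs 0 = 0 ∧ Qs 1 = ΦF

/-- `P₀ f := f - ∫₀¹ f`. -/
def P0 (f : ℝ → ℝ) (η : ℝ) : ℝ := f η - ∫ x in (0 : ℝ)..1, f x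

/-- `H_init := Q_init' - K ∘ Q_init` (derivative within `[0,1]`). -/
def Hinit (K : ℝ → ℝ) (Qinit : ℝ → ℝ) (η : ℝ) : ℝ :=
  derivWithin Qinit (Icc 0 1) η - K (Qinit η)

/-!
Along the characteristics `η - τ = const` the excess `H = ∂_η Q - K(Q)` satisfies
`(∂_τ + ∂_η) H = K'(Q) (H - 1/N)`, where `1/N(τ) = H(τ, 1) = H(τ, 0)`; the compatibility condition
makes `H` continuous on the circle. In characteristic coordinates the pair `(H, Q)` therefore solves
an ODE in the Banach space of continuous functions on the circle, and truncating `H` to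
`[min H_init, max H_init]` and extending `K` affinely outside `[0, Φ_F]` makes its vector field
globally Lipschitz and bounded, so the solution is global.

Since `K' ≤ 0`, a value of `H` above `max H_init` decreases and one below `min H_init` increases, so
the truncation is never active; this is also the bound on `1/N = H(·, 1)`. As `H > 0` and `K` is
positive up to `Φ_F`, each profile `Q(τ, ·)` increases from `0` to `Φ_F`, so the extension of `K` is
not seen either.

For uniqueness, the difference of two solutions minus the time integral of the difference of their
rates is periodic in `η`, and its derivative along characteristics is bounded by its own size: a
maximum principle with an exponential weight forces it to vanish.
-/

section IntegralCurve

variable {E : Type*} [NormedAddCommGroup E] [NormedSpace ℝ E] [CompleteSpace E]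
  {f : ℝ → E → E} {C L : NNReal}

theorem exists_hasDerivAt_Ioo_of_lipschitzWith (x₀ : E) (hlip : ∀ t, LipschitzWith C (f t))
    (hcont : ∀ x, Continuous fun t => f t x) (hbound : ∀ t x, ‖f t x‖ ≤ L) (r : NNReal) :
    ∃ α : ℝ → E, α 0 = x₀ ∧ ∀ t ∈ Ioo (-r : ℝ) r, HasDerivAt α (f t (α t)) t := by
  have hPL : IsPicardLindelof f (tmin := -r) (tmax := r) ⟨0, by simp⟩ x₀ (L * r) 0 L C :=
    ⟨fun t _ => (hlip t).lipschitzOnWith, fun x _ => (hcont x).continuousOn,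
      fun t _ x _ => hbound t x, by simp⟩
  obtain ⟨α, hα₀, hα⟩ := hPL.exists_eq_forall_mem_Icc_hasDerivWithinAt₀
  exact ⟨α, hα₀, fun t ht => (hα t (Ioo_subset_Icc_self ht)).hasDerivAt (Icc_mem_nhds ht.1 ht.2)⟩

theorem exists_isIntegralCurve_of_lipschitzWith (x₀ : E) (hlip : ∀ t, LipschitzWith C (f t))
    (hcont : ∀ x, Continuous fun t => f t x) (hbound : ∀ t x, ‖f t x‖ ≤ L) :
    ∃ α : ℝ → E, α 0 = x₀ ∧ IsIntegralCurve α f := by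
  choose A hA₀ hA using fun n : ℕ =>
    exists_hasDerivAt_Ioo_of_lipschitzWith x₀ hlip hcont hbound (n + 1 : ℕ)
  simp only [Nat.cast_add, Nat.cast_one, NNReal.coe_add, NNReal.coe_natCast, NNReal.coe_one] at hA
  have hA_mono (m n : ℕ) (hmn : m ≤ n) : EqOn (A m) (A n) (Ioo (-(m + 1 : ℝ)) (m + 1)) := by
    have hmn' : (m : ℝ) ≤ n := by exact_mod_cast hmn
    refine ODE_solution_unique_of_mem_Ioo (v := f) (s := fun _ => univ) (K := C) (t₀ := 0)
      (fun t _ => (hlip t).lipschitzOnWith) ⟨by linarith [m.cast_nonneg (α := ℝ)], by positivity⟩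
      (fun t ht => ⟨hA m t ht, trivial⟩)
      (fun t ht => ⟨hA n t ⟨by linarith [ht.1], by linarith [ht.2]⟩, trivial⟩)
      ((hA₀ m).trans (hA₀ n).symm)
  have mem_ceil (s : ℝ) : s ∈ Ioo (-(⌈|s|⌉₊ + 1 : ℝ)) (⌈|s|⌉₊ + 1) :=
    abs_lt.1 ((Nat.le_ceil |s|).trans_lt (lt_add_one _))
  have hA_ceil (n : ℕ) (s : ℝ) (hs : s ∈ Ioo (-(n + 1 : ℝ)) (n + 1)) : A ⌈|s|⌉₊ s = A n s := by
    rcases le_total ⌈|s|⌉₊ n with h | h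
    · exact hA_mono _ _ h (mem_ceil s)
    · exact (hA_mono _ _ h hs).symm
  refine ⟨fun t => A ⌈|t|⌉₊ t, hA₀ _, fun t => ?_⟩
  refine (hA _ t (mem_ceil t)).congr_of_eventuallyEq ?_
  filter_upwards [Ioo_mem_nhds (mem_ceil t).1 (mem_ceil t).2] with s hs using hA_ceil _ s hs

end IntegralCurve

section PartialDerivatives

variable {E₁ E₂ F : Type*} [NormedAddCommGroup E₁] [NormedSpace ℝ E₁]
  [NormedAddCommGroup E₂] [NormedAddCommGroup F] [NormedSpace ℝ F]
  {f : E₁ → E₂ → F} {s : Set E₁} {t : Set E₂}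

theorem isLittleO_sub_of_hasFDerivWithinAt_left {f₁ : E₁ → E₂ → E₁ →L[ℝ] F} {u : E₁ × E₂}
    (hs : Convex ℝ s) (hu : u ∈ s ×ˢ t)
    (hf₁ : ContinuousWithinAt (Function.uncurry f₁) (s ×ˢ t) u)
    (hf : ∀ x ∈ s, ∀ y ∈ t, HasFDerivWithinAt (fun x => f x y) (f₁ x y) s x) :
    (fun p : E₁ × E₂ => f p.1 p.2 - f u.1 p.2 - f₁ u.1 u.2 (p.1 - u.1))
      =o[𝓝[s ×ˢ t] u] fun p => p - u := by
  refine Asymptotics.isLittleO_iff.2 fun ε hε => ?_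
  obtain ⟨δ, hδ, hclose⟩ := Metric.continuousWithinAt_iff.1 hf₁ ε hε
  filter_upwards [self_mem_nhdsWithin, mem_nhdsWithin_of_mem_nhds (Metric.ball_mem_nhds u hδ)]
    with p hp hpu
  have hpu' : dist p.1 u.1 < δ ∧ dist p.2 u.2 < δ := by
    rwa [Metric.mem_ball, Prod.dist_eq, max_lt_iff] at hpu
  calc ‖f p.1 p.2 - f u.1 p.2 - f₁ u.1 u.2 (p.1 - u.1)‖ ≤ ε * ‖p.1 - u.1‖ := by
        refine (hs.inter (convex_ball u.1 δ)).norm_image_sub_le_of_norm_hasFDerivWithin_le'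
          (f := fun x => f x p.2) (f' := fun x => f₁ x p.2)
          (fun x hx => (hf x hx.1 p.2 hp.2).mono inter_subset_left) (fun x hx => ?_)
          ⟨hu.1, Metric.mem_ball_self hδ⟩ ⟨hp.1, hpu'.1⟩
        rw [← dist_eq_norm]
        exact (hclose (x := (x, p.2)) ⟨hx.1, hp.2⟩ (max_lt hx.2 hpu'.2)).le
    _ ≤ ε * ‖p - u‖ := by gcongr; exact norm_fst_le (p - u)

variable [NormedSpace ℝ E₂]

theorem hasFDerivWithinAt_uncurry {f₁ : E₁ → E₂ → E₁ →L[ℝ] F} {f₂ : E₂ →L[ℝ] F} {u : E₁ × E₂}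
    (hs : Convex ℝ s) (hu : u ∈ s ×ˢ t)
    (hf₁ : ContinuousWithinAt (Function.uncurry f₁) (s ×ˢ t) u)
    (hleft : ∀ x ∈ s, ∀ y ∈ t, HasFDerivWithinAt (fun x => f x y) (f₁ x y) s x)
    (hright : HasFDerivWithinAt (f u.1) f₂ t u.2) :
    HasFDerivWithinAt (Function.uncurry f) ((f₁ u.1 u.2).coprod f₂) (s ×ˢ t) u := by
  have hsnd : (fun p : E₁ × E₂ => f u.1 p.2 - f u.1 u.2 - f₂ (p.2 - u.2))
      =o[𝓝[s ×ˢ t] u] fun p => p - u :=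
    (hright.comp u hasFDerivWithinAt_snd mapsTo_snd_prod).isLittleO
  refine .of_isLittleO
    (((isLittleO_sub_of_hasFDerivWithinAt_left hs hu hf₁ hleft).add hsnd).congr_left fun p => ?_)
  simp only [Function.uncurry_def, ContinuousLinearMap.coprod_apply, Prod.fst_sub, Prod.snd_sub]
  abel

theorem contDiffOn_one_uncurry {f₁ : E₁ → E₂ → E₁ →L[ℝ] F} {f₂ : E₁ → E₂ → E₂ →L[ℝ] F}
    (hs : Convex ℝ s) (hs' : UniqueDiffOn ℝ s) (ht : UniqueDiffOn ℝ t)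
    (hf₁ : ContinuousOn (Function.uncurry f₁) (s ×ˢ t))
    (hf₂ : ContinuousOn (Function.uncurry f₂) (s ×ˢ t))
    (hleft : ∀ x ∈ s, ∀ y ∈ t, HasFDerivWithinAt (fun x => f x y) (f₁ x y) s x)
    (hright : ∀ x ∈ s, ∀ y ∈ t, HasFDerivWithinAt (f x) (f₂ x y) t y) :
    ContDiffOn ℝ 1 (Function.uncurry f) (s ×ˢ t) := by
  have hderiv (p) (hp : p ∈ s ×ˢ t) := hasFDerivWithinAt_uncurry hs hp (hf₁ p hp) hleft
    (hright p.1 hp.1 p.2 hp.2)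
  rw [← zero_add (1 : WithTop ℕ∞), contDiffOn_succ_iff_fderivWithin (hs'.prod ht), contDiffOn_zero]
  refine ⟨fun p hp => (hderiv p hp).differentiableWithinAt, by simp, ?_⟩
  have hcoprod : ContinuousOn (fun p : E₁ × E₂ => (f₁ p.1 p.2).coprod (f₂ p.1 p.2)) (s ×ˢ t) :=
    (ContinuousLinearMap.coprodEquivL (𝕜 := ℝ) ℝ).continuous.comp_continuousOn (hf₁.prodMk hf₂)
  exact hcoprod.congr fun p hp => (hderiv p hp).fderivWithin ((hs'.prod ht) p hp)

theorem contDiffOn_one_uncurry_of_hasDerivWithinAt {f a b : ℝ → ℝ → F} {s t : Set ℝ}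
    (hs : Convex ℝ s) (hs' : UniqueDiffOn ℝ s) (ht : UniqueDiffOn ℝ t)
    (ha : ContinuousOn (Function.uncurry a) (s ×ˢ t))
    (hb : ContinuousOn (Function.uncurry b) (s ×ˢ t))
    (hleft : ∀ x ∈ s, ∀ y ∈ t, HasDerivWithinAt (fun x => f x y) (a x y) s x)
    (hright : ∀ x ∈ s, ∀ y ∈ t, HasDerivWithinAt (f x) (b x y) t y) :
    ContDiffOn ℝ 1 (Function.uncurry f) (s ×ˢ t) :=
  have hspan := (ContinuousLinearMap.toSpanSingletonLIE ℝ F).continuous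
  contDiffOn_one_uncurry
    (f₁ := fun x y => ContinuousLinearMap.toSpanSingleton ℝ (a x y))
    (f₂ := fun x y => ContinuousLinearMap.toSpanSingleton ℝ (b x y))
    hs hs' ht (hspan.comp_continuousOn ha) (hspan.comp_continuousOn hb)
    (fun x hx y hy => (hleft x hx y hy).hasFDerivWithinAt)
    (fun x hx y hy => (hright x hx y hy).hasFDerivWithinAt)

end PartialDerivatives

section Comparison

variable {g g' : ℝ → ℝ} {a b M d : ℝ}

theorem le_of_hasDerivWithinAt_nonpos_of_lt (hg : ContinuousOn g (Icc a b))
    (hg' : ∀ t ∈ Ico a b, HasDerivWithinAt g (g' t) (Ici t) t) (ha : g a ≤ M)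
    (h : ∀ t ∈ Ico a b, M < g t → g' t ≤ 0) {t : ℝ} (ht : t ∈ Icc a b) : g t ≤ M := by
  refine le_of_forall_pos_le_add fun ε hε => ?_
  have hpos : 0 < 1 + (t - a) := by linarith [ht.1]
  set e := ε / (1 + (t - a)) with he
  have hepos : 0 < e := by positivity
  have hle := image_le_of_deriv_right_lt_deriv_boundary (B := fun s => M + e * (1 + (s - a)))
    (B' := fun _ => e) hg hg' (by simp only [sub_self]; linarith)
    (fun s => by
      simpa using ((((hasDerivAt_id s).sub_const a).const_add 1).const_mul e).const_add M)
    (fun s hs hs' => (h s hs ?_).trans_lt hepos) ht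
  · rwa [he, div_mul_cancel₀ _ hpos.ne'] at hle
  · have : 0 < e * (1 + (s - a)) := mul_pos hepos (by linarith [hs.1])
    linarith

theorem nonneg_of_isMaxOn_Icc_right (hab : a < b) (hg : HasDerivWithinAt g d (Icc a b) b)
    (hmax : IsMaxOn g (Icc a b) b) : 0 ≤ d := by
  have htangent : a - b ∈ posTangentConeAt (Icc a b) b :=
    sub_mem_posTangentConeAt_of_segment_subset
      ((convex_Icc a b).segment_subset (right_mem_Icc.2 hab.le) (left_mem_Icc.2 hab.le))
  have := hmax.localize.hasFDerivWithinAt_nonpos hg.hasFDerivWithinAt htangent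
  simp only [ContinuousLinearMap.toSpanSingleton_apply, smul_eq_mul] at this
  exact nonneg_of_mul_nonpos_right this (by linarith)

theorem le_right_of_deriv_pos_of_le (hg : ∀ x ∈ Icc a b, HasDerivWithinAt g (g' x) (Icc a b) x)
    (h : ∀ x ∈ Icc a b, g x ≤ g b → 0 < g' x) {x : ℝ} (hx : x ∈ Icc a b) : g x ≤ g b := by
  by_contra! hlt
  have hcont : ContinuousOn g (Icc a b) := fun y hy => (hg y hy).continuousWithinAt
  obtain ⟨y, hy, hmin⟩ := isCompact_Icc.exists_isMinOn (nonempty_Icc.2 hx.2)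
    (hcont.mono (Icc_subset_Icc_left hx.1))
  have hyb : g y ≤ g b := hmin (right_mem_Icc.2 hx.2)
  have hxy : x < y := hy.1.lt_of_ne (by rintro rfl; exact hlt.not_ge hyb)
  have hy' : y ∈ Icc a b := ⟨hx.1.trans hy.1, hy.2⟩
  have hneg := nonneg_of_isMaxOn_Icc_right hxy
    ((hg y hy').neg.mono (Icc_subset_Icc hx.1 hy.2))
    (IsMinOn.neg (hmin.on_subset (Icc_subset_Icc_right hy.2)))
  linarith [h y hy' hyb]

theorem monotoneOn_of_deriv_pos_of_le (hg : ∀ x ∈ Icc a b, HasDerivWithinAt g (g' x) (Icc a b) x)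
    (h : ∀ x ∈ Icc a b, g x ≤ g b → 0 < g' x) : MonotoneOn g (Icc a b) :=
  monotoneOn_of_hasDerivWithinAt_nonneg (convex_Icc a b)
    (fun x hx => (hg x hx).continuousWithinAt)
    (fun x hx => (hg x (interior_subset hx)).mono interior_subset)
    (fun x hx => (h x (interior_subset hx) (le_right_of_deriv_pos_of_le hg h
      (interior_subset hx))).le)

end Comparison

section MovingIntegral

variable {E : Type*} [NormedAddCommGroup E] [NormedSpace ℝ E]
  {p : ℝ} [Fact (0 < p)]

theorem hasDerivAt_zero_integral_of_isLittleO {r : ℝ → C(AddCircle p, E)} {t : ℝ} (hr₀ : r t = 0)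
    (hr : r =o[𝓝 t] fun s => s - t) (a b : ℝ) :
    HasDerivAt (fun s => ∫ x in a..b, r s ((x - s : ℝ) : AddCircle p)) 0 t := by
  refine hasDerivAt_iff_isLittleO.2 (Asymptotics.IsBigO.trans_isLittleO ?_ hr)
  refine Asymptotics.IsBigO.of_bound |b - a| (Eventually.of_forall fun s => ?_)
  simp only [hr₀, ContinuousMap.zero_apply, intervalIntegral.integral_zero, smul_zero, sub_zero]
  rw [mul_comm]
  exact intervalIntegral.norm_integral_le_of_norm_le_const fun x _ => (r s).norm_coe_le_norm _

variable [CompleteSpace E]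

theorem hasDerivAt_integral_comp_sub {g : ℝ → E} (hg : Continuous g) (a b t : ℝ) :
    HasDerivAt (fun s => ∫ x in a..b, g (x - s)) (g (a - t) - g (b - t)) t := by
  have hprim (y : ℝ) : HasDerivAt (fun z => ∫ x in 0..z, g x) (g y) y :=
    (hg.integral_hasStrictDerivAt 0 y).hasDerivAt
  have hshift (c : ℝ) : HasDerivAt (fun s => ∫ x in 0..(c - s), g x) (-g (c - t)) t :=
    (hprim (c - t)).comp_const_sub c t
  refine ((hshift b).fun_sub (hshift a)).congr_deriv (by abel) |>.congr_of_eventuallyEq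
    (Eventually.of_forall fun s => ?_)
  simp only [intervalIntegral.integral_comp_sub_right, intervalIntegral.integral_interval_sub_left
    (hg.intervalIntegrable 0 (b - s)) (hg.intervalIntegrable 0 (a - s))]

theorem hasDerivAt_integral_moving {G : ℝ → C(AddCircle p, E)} {G' : C(AddCircle p, E)} {t : ℝ}
    (hG : HasDerivAt G G' t) (a b : ℝ) :
    HasDerivAt (fun s => ∫ x in a..b, G s ((x - s : ℝ) : AddCircle p))
      (G t ((a - t : ℝ) : AddCircle p) - G t ((b - t : ℝ) : AddCircle p) +
        ∫ x in a..b, G' ((x - t : ℝ) : AddCircle p)) t := by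
  set r : ℝ → C(AddCircle p, E) := fun s => G s - G t - (s - t) • G' with hr
  have hsplit (s : ℝ) : ∫ x in a..b, G s ((x - s : ℝ) : AddCircle p) =
      (∫ x in a..b, G t ((x - s : ℝ) : AddCircle p)) +
      (s - t) • (∫ x in a..b, G' ((x - s : ℝ) : AddCircle p)) +
      ∫ x in a..b, r s ((x - s : ℝ) : AddCircle p) := by
    have hint (g : C(AddCircle p, E)) :
        IntervalIntegrable (fun x => g ((x - s : ℝ) : AddCircle p)) volume a b :=
      Continuous.intervalIntegrable (by fun_prop) a b
    rw [show G s = G t + (s - t) • G' + r s by simp [hr], ← intervalIntegral.integral_smul]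
    exact (intervalIntegral.integral_add (hint (G t + (s - t) • G')) (hint (r s))).trans
      (congrArg (· + _) (intervalIntegral.integral_add (hint (G t)) (hint ((s - t) • G'))))
  have hrem := hasDerivAt_zero_integral_of_isLittleO (r := r) (by simp [hr])
    (hasDerivAt_iff_isLittleO.1 hG) a b
  have hfixed (g : C(AddCircle p, E)) := hasDerivAt_integral_comp_sub
    (g := fun x : ℝ => g (x : AddCircle p)) (by fun_prop) a b t
  simp_rw [hsplit]
  refine (((hfixed (G t)).fun_add (((hasDerivAt_id t).sub_const t).fun_smul
    (hfixed G'))).fun_add hrem).congr_deriv ?_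
  simp

end MovingIntegral

theorem integral_derivWithin_Icc {f : ℝ → ℝ} {a b x : ℝ} (hf : ContDiffOn ℝ 1 f (Icc a b))
    (hab : a < b) (hx : x ∈ Icc a b) :
    ∫ y in a..x, derivWithin f (Icc a b) y = f x - f a := by
  have hsub : Icc a x ⊆ Icc a b := Icc_subset_Icc_right hx.2
  refine intervalIntegral.integral_eq_sub_of_hasDerivAt_of_le hx.1 (hf.continuousOn.mono hsub)
    (fun y hy => ?_) ?_
  · exact (hf.differentiableOn one_ne_zero y (hsub (Ioo_subset_Icc_self hy))).hasDerivWithinAt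
      |>.hasDerivAt (Icc_mem_nhds hy.1 (hy.2.trans_le hx.2))
  · exact ((hf.continuousOn_derivWithin (uniqueDiffOn_Icc hab) le_rfl).mono
      hsub).intervalIntegrable_of_Icc hx.1

theorem liftIco_coe_of_mem_Icc {β : Type*} {p : ℝ} [Fact (0 < p)] {f : ℝ → β} (hf : f 0 = f p)
    {x : ℝ} (hx : x ∈ Icc 0 p) : AddCircle.liftIco p 0 f x = f x := by
  rcases hx.2.eq_or_lt with rfl | hlt
  · rw [← hf, AddCircle.coe_period, ← AddCircle.coe_zero]
    exact AddCircle.liftIco_zero_coe_apply (left_mem_Ico.2 Fact.out)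
  · exact AddCircle.liftIco_zero_coe_apply ⟨hx.1, hlt⟩

theorem sInf_image_pos_of_isCompact {X : Type*} [TopologicalSpace X] {s : Set X} {f : X → ℝ}
    (hs : IsCompact s) (hne : s.Nonempty) (hf : ContinuousOn f s) (hpos : ∀ x ∈ s, 0 < f x) :
    0 < sInf (f '' s) := by
  obtain ⟨x, hx, hmin⟩ := hs.exists_sInf_image_eq hne hf
  exact hmin ▸ hpos x hx

section TimeInterval

variable {T : ℝ≥0∞} {τ : ℝ}

theorem Ico0_top : Ico0 ⊤ = Ici 0 := by
  ext τ
  simp [Ico0]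

theorem isOpen_setOf_ofReal_lt : IsOpen {τ : ℝ | ENNReal.ofReal τ < T} :=
  isOpen_lt ENNReal.continuous_ofReal continuous_const

theorem uniqueDiffOn_Ico0 : UniqueDiffOn ℝ (Ico0 T) :=
  (uniqueDiffOn_Ici 0).inter isOpen_setOf_ofReal_lt

theorem Ico0_mem_nhdsWithin_Ici (hτ : τ ∈ Ico0 T) : Ico0 T ∈ 𝓝[Ici 0] τ :=
  inter_mem self_mem_nhdsWithin
    (mem_nhdsWithin_of_mem_nhds (isOpen_setOf_ofReal_lt.mem_nhds hτ.2))

theorem Icc_subset_Ico0 (hτ : τ ∈ Ico0 T) : Icc 0 τ ⊆ Ico0 T :=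
  fun _ hs => ⟨hs.1, (ENNReal.ofReal_le_ofReal hs.2).trans_lt hτ.2⟩

end TimeInterval

section Characteristics

variable {T : ℝ≥0∞} {Q : ℝ → ℝ → ℝ} {τ η : ℝ}

theorem hasFDerivWithinAt_uncurry_strip
    (hQ : ContDiffOn ℝ 1 (Function.uncurry Q) (Ico0 T ×ˢ Icc 0 1))
    (hτ : τ ∈ Ico0 T) (hη : η ∈ Icc (0 : ℝ) 1) :
    HasFDerivWithinAt (Function.uncurry Q)
      (fderivWithin ℝ (Function.uncurry Q) (Ico0 T ×ˢ Icc 0 1) (τ, η)) (Ico0 T ×ˢ Icc 0 1) (τ, η) :=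
  (hQ.differentiableOn one_ne_zero (τ, η) ⟨hτ, hη⟩).hasFDerivWithinAt

theorem hasDerivWithinAt_pdTau (hQ : ContDiffOn ℝ 1 (Function.uncurry Q) (Ico0 T ×ˢ Icc 0 1))
    (hτ : τ ∈ Ico0 T) (hη : η ∈ Icc (0 : ℝ) 1) :
    HasDerivWithinAt (fun s => Q s η) (pdTau Q τ η) (Ici 0) τ := by
  have hline : HasDerivWithinAt (fun s : ℝ => (s, η)) ((1 : ℝ), (0 : ℝ)) (Ico0 T) τ :=
    (hasDerivWithinAt_id τ _).prodMk (hasDerivWithinAt_const τ _ η)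
  exact (((hasFDerivWithinAt_uncurry_strip hQ hτ hη).comp_hasDerivWithinAt τ hline
    fun s hs => mk_mem_prod hs hη).mono_of_mem_nhdsWithin
    (Ico0_mem_nhdsWithin_Ici hτ)).differentiableWithinAt.hasDerivWithinAt

theorem hasDerivWithinAt_pdEta (hQ : ContDiffOn ℝ 1 (Function.uncurry Q) (Ico0 T ×ˢ Icc 0 1))
    (hτ : τ ∈ Ico0 T) (hη : η ∈ Icc (0 : ℝ) 1) :
    HasDerivWithinAt (Q τ) (pdEta Q τ η) (Icc 0 1) η := by
  have hline : HasDerivWithinAt (fun x : ℝ => (τ, x)) ((0 : ℝ), (1 : ℝ)) (Icc 0 1) η :=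
    (hasDerivWithinAt_const η _ τ).prodMk (hasDerivWithinAt_id η _)
  exact ((hasFDerivWithinAt_uncurry_strip hQ hτ hη).comp_hasDerivWithinAt η hline
    fun x hx => mk_mem_prod hτ hx).differentiableWithinAt.hasDerivWithinAt

theorem fderivWithin_uncurry_apply_one_one
    (hQ : ContDiffOn ℝ 1 (Function.uncurry Q) (Ico0 T ×ˢ Icc 0 1))
    (hτ : τ ∈ Ico0 T) (hη : η ∈ Icc (0 : ℝ) 1) :
    fderivWithin ℝ (Function.uncurry Q) (Ico0 T ×ˢ Icc 0 1) (τ, η) (1, 1) =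
      pdTau Q τ η + pdEta Q τ η := by
  have hQ' := hasFDerivWithinAt_uncurry_strip hQ hτ hη
  have htau := hQ'.comp_hasDerivWithinAt τ
    ((hasDerivWithinAt_id τ (Ico0 T)).prodMk (hasDerivWithinAt_const τ _ η))
    fun s hs => mk_mem_prod hs hη
  have heta := hQ'.comp_hasDerivWithinAt η
    ((hasDerivWithinAt_const η (Icc 0 1) τ).prodMk (hasDerivWithinAt_id η _))
    fun x hx => mk_mem_prod hτ hx
  rw [(uniqueDiffOn_Ico0 τ hτ).eq_deriv _
      ((hasDerivWithinAt_pdTau hQ hτ hη).mono inter_subset_left) htau,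
    (uniqueDiffOn_Icc zero_lt_one η hη).eq_deriv _ (hasDerivWithinAt_pdEta hQ hτ hη) heta,
    ← map_add]
  simp

theorem hasDerivWithinAt_characteristic
    (hQ : ContDiffOn ℝ 1 (Function.uncurry Q) (Ico0 T ×ˢ Icc 0 1))
    (hτ : τ ∈ Ico0 T) (hη : η ∈ Icc (0 : ℝ) 1) :
    HasDerivWithinAt (fun s => Q (τ + s) (η + s)) (pdTau Q τ η + pdEta Q τ η)
      (Icc (-min τ η) 0) 0 := by
  have hline : HasDerivWithinAt (fun s : ℝ => (τ + s, η + s)) ((1 : ℝ), (1 : ℝ))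
      (Icc (-min τ η) 0) 0 :=
    ((hasDerivWithinAt_id 0 _).const_add τ).prodMk ((hasDerivWithinAt_id 0 _).const_add η)
  rw [← fderivWithin_uncurry_apply_one_one hQ hτ hη]
  refine (hasFDerivWithinAt_uncurry_strip hQ hτ hη).comp_hasDerivWithinAt_of_eq 0 hline
    (fun s hs => ⟨Icc_subset_Ico0 hτ ?_, ?_⟩) (by simp)
  · exact ⟨by linarith [hs.1, min_le_left τ η], by linarith [hs.2]⟩
  · exact ⟨by linarith [hs.1, min_le_right τ η], by linarith [hs.2, hη.2]⟩

theorem continuousOn_pdTau_add_pdEta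
    (hQ : ContDiffOn ℝ 1 (Function.uncurry Q) (Ico0 T ×ˢ Icc 0 1)) :
    ContinuousOn (Function.uncurry fun τ η => pdTau Q τ η + pdEta Q τ η)
      (Ico0 T ×ˢ Icc 0 1) :=
  ((hQ.continuousOn_fderivWithin (uniqueDiffOn_Ico0.prod (uniqueDiffOn_Icc zero_lt_one))
    le_rfl).clm_apply continuousOn_const).congr fun _ hp =>
      (fderivWithin_uncurry_apply_one_one hQ hp.1 hp.2).symm

end Characteristics

section MaximumPrinciple

variable {P R : ℝ → ℝ → ℝ} {T L : ℝ}

/- At a maximum point `(τ, η)` of `exp (-(4 L + 1) τ) P²` the backward derivative along the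
characteristic is nonnegative, whereas the growth bound makes it negative. -/
theorem not_isMaxOn_of_characteristic_deriv_le {τ η : ℝ} (hL : 0 ≤ L)
    (hτ : τ ∈ Ioc 0 T) (hη : η ∈ Ioc (0 : ℝ) 1) (hne : P τ η ≠ 0)
    (hderiv : HasDerivWithinAt (fun s => P (τ + s) (η + s)) (R τ η) (Icc (-min τ η) 0) 0)
    (hR : |R τ η| ≤ L * (|P τ η| + |P τ 0|)) :
    ¬ IsMaxOn (fun p : ℝ × ℝ => exp (-((4 * L + 1) * p.1)) * P p.1 p.2 ^ 2)
      (Icc 0 T ×ˢ Icc 0 1) (τ, η) := by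
  intro hmax
  have hpos : 0 < min τ η := lt_min hτ.1 hη.1
  have hweight : HasDerivWithinAt (fun s : ℝ => exp (-((4 * L + 1) * (τ + s))))
      (exp (-((4 * L + 1) * (τ + 0))) * -((4 * L + 1) * 1)) (Icc (-min τ η) 0) 0 :=
    (((hasDerivWithinAt_id 0 _).const_add τ).const_mul (4 * L + 1)).fun_neg.exp
  have hnonneg := nonneg_of_isMaxOn_Icc_right (neg_lt_zero.2 hpos)
    (hweight.fun_mul (hderiv.fun_pow 2)) fun s hs => by
      simpa using hmax (a := (τ + s, η + s))
        ⟨⟨by linarith [hs.1, min_le_left τ η], by linarith [hs.2, hτ.2]⟩,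
          by linarith [hs.1, min_le_right τ η], by linarith [hs.2, hη.2]⟩
  have hP0 : |P τ 0| ≤ |P τ η| := by
    have h0 := hmax (a := (τ, 0)) ⟨⟨hτ.1.le, hτ.2⟩, left_mem_Icc.2 zero_le_one⟩
    exact sq_le_sq.1 (le_of_mul_le_mul_left h0 (exp_pos _))
  have hPR : P τ η * R τ η ≤ 2 * L * P τ η ^ 2 := calc
    P τ η * R τ η ≤ |P τ η| * |R τ η| := (le_abs_self _).trans (abs_mul _ _).le
    _ ≤ |P τ η| * (L * (|P τ η| + |P τ η|)) := by gcongr; exact hR.trans (by gcongr)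
    _ = 2 * L * P τ η ^ 2 := by rw [← sq_abs]; ring
  have hsq : 0 < P τ η ^ 2 := by positivity
  have hneg : exp (-((4 * L + 1) * τ)) * (2 * (P τ η * R τ η) - (4 * L + 1) * P τ η ^ 2) < 0 :=
    mul_neg_of_pos_of_neg (exp_pos _) (by linarith)
  simp only [add_zero, Nat.cast_ofNat, Nat.add_one_sub_one, pow_one] at hnonneg
  linarith

/- By periodicity the maximum may be taken at `η > 0`, where the characteristic can be followed
backwards. -/
theorem eq_zero_of_periodic_transport (hL : 0 ≤ L)
    (hP : ContinuousOn (Function.uncurry P) (Icc 0 T ×ˢ Icc 0 1))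
    (hper : ∀ τ ∈ Icc 0 T, P τ 0 = P τ 1) (hinit : ∀ η ∈ Icc (0 : ℝ) 1, P 0 η = 0)
    (hderiv : ∀ τ ∈ Icc 0 T, ∀ η ∈ Icc (0 : ℝ) 1,
      HasDerivWithinAt (fun s => P (τ + s) (η + s)) (R τ η) (Icc (-min τ η) 0) 0)
    (hR : ∀ τ ∈ Icc 0 T, ∀ η ∈ Icc (0 : ℝ) 1, |R τ η| ≤ L * (|P τ η| + |P τ 0|))
    {σ ξ : ℝ} (hσ : σ ∈ Icc 0 T) (hξ : ξ ∈ Icc (0 : ℝ) 1) : P σ ξ = 0 := by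
  by_contra hne
  let E : ℝ × ℝ → ℝ := fun p => exp (-((4 * L + 1) * p.1)) * P p.1 p.2 ^ 2
  have hE : ContinuousOn E (Icc 0 T ×ˢ Icc 0 1) :=
    (by fun_prop : Continuous fun p : ℝ × ℝ => exp (-((4 * L + 1) * p.1))).continuousOn.mul
      (hP.pow 2)
  obtain ⟨⟨τ, ζ⟩, ⟨hτ, hζ⟩, hmaxζ⟩ := (isCompact_Icc.prod isCompact_Icc).exists_isMaxOn
    ⟨(σ, ξ), hσ, hξ⟩ hE
  simp only at hτ hζ
  obtain ⟨η, hη, hEη⟩ : ∃ η ∈ Ioc (0 : ℝ) 1, E (τ, ζ) = E (τ, η) := by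
    rcases hζ.1.eq_or_lt with hζ0 | hζ0
    · exact ⟨1, by simp, by simp only [E, ← hζ0, hper τ hτ]⟩
    · exact ⟨ζ, ⟨hζ0, hζ.2⟩, rfl⟩
  have hmax : IsMaxOn E (Icc 0 T ×ˢ Icc 0 1) (τ, η) := fun p hp => (hmaxζ hp).trans hEη.le
  have hEpos : 0 < E (τ, η) :=
    (by positivity : 0 < E (σ, ξ)).trans_le (hmax (a := (σ, ξ)) ⟨hσ, hξ⟩)
  have hPne : P τ η ≠ 0 := fun h => by simp [E, h] at hEpos
  have hη' : η ∈ Icc (0 : ℝ) 1 := Ioc_subset_Icc_self hη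
  have hτpos : 0 < τ := hτ.1.lt_of_ne (by rintro rfl; exact hPne (hinit η hη'))
  exact not_isMaxOn_of_characteristic_deriv_le hL ⟨hτpos, hτ.2⟩ hη hPne
    (hderiv τ hτ η hη') (hR τ hτ η hη') hmax

end MaximumPrinciple

namespace IsRelaxedSol

variable {K : ℝ → ℝ} {ΦF : ℝ} {T : ℝ≥0∞} {Qinit : ℝ → ℝ} {Q : ℝ → ℝ → ℝ} {u : ℝ → ℝ} {L : NNReal}

theorem pde_Icc (h : IsRelaxedSol K ΦF T Qinit Q u) (hK : Continuous K) {τ η : ℝ}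
    (hτ : τ ∈ Ico0 T) (hη : η ∈ Icc (0 : ℝ) 1) :
    pdTau Q τ η + pdEta Q τ η = u τ + K (Q τ η) := by
  have hmaps : MapsTo (fun η : ℝ => (τ, η)) (Icc 0 1) (Ico0 T ×ˢ Icc 0 1) :=
    fun η hη => ⟨hτ, hη⟩
  refine EqOn.of_subset_closure (s := Ioo 0 1) (t := Icc 0 1)
    (f := fun η => pdTau Q τ η + pdEta Q τ η) (g := fun η => u τ + K (Q τ η))
    (h.pde τ hτ) ((continuousOn_pdTau_add_pdEta h.reg).comp (by fun_prop) hmaps)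
    (continuousOn_const.add (hK.comp_continuousOn (h.reg.continuousOn.comp (by fun_prop) hmaps)))
    Ioo_subset_Icc_self (by rw [closure_Ioo zero_ne_one]) hη

theorem apply_one (h : IsRelaxedSol K ΦF T Qinit Q u) (hK : LipschitzWith L K) {τ : ℝ}
    (hτ : τ ∈ Ico0 T) : Q τ 1 = ΦF := by
  have hone : (1 : ℝ) ∈ Icc (0 : ℝ) 1 := right_mem_Icc.2 zero_le_one
  have hderiv (s : ℝ) (hs : s ∈ Ico0 T) :
      HasDerivWithinAt (fun s => Q s 1 - ΦF) (K (Q s 1) - K ΦF) (Ici 0) s := by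
    refine ((hasDerivWithinAt_pdTau h.reg hs hone).sub_const ΦF).congr_deriv ?_
    linarith [h.pde_Icc hK.continuous hs hone, h.Ndef s hs]
  have hsub := Icc_subset_Ico0 hτ
  refine sub_eq_zero.1 (eq_zero_of_abs_deriv_le_mul_abs_self_of_eq_zero_right
    (f := fun s => Q s 1 - ΦF) (f' := fun s => K (Q s 1) - K ΦF) (K := L) (a := 0) (b := τ)
    (fun s hs => (hderiv s (hsub hs)).continuousWithinAt.mono Icc_subset_Ici_self)
    (fun s hs => (hderiv s (hsub (Ico_subset_Icc_self hs))).mono (Ici_subset_Ici.2 hs.1))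
    (by rw [h.init 1 hone, h.init1, sub_self])
    (fun s _ => hK.dist_le_mul _ _) τ (right_mem_Icc.2 hτ.1))

variable {Q₁ Q₂ : ℝ → ℝ → ℝ} {u₁ u₂ : ℝ → ℝ}

/- With `W = ∫ (u₁ - u₂)`, the function `Q₁ - Q₂ - W` is periodic in `η`, and its derivative along
characteristics `K(Q₁) - K(Q₂)` no longer involves the unknown rates. -/
theorem sub_eq_integral (h₁ : IsRelaxedSol K ΦF T Qinit Q₁ u₁)
    (h₂ : IsRelaxedSol K ΦF T Qinit Q₂ u₂) (hK : LipschitzWith L K) {σ ξ : ℝ} (hσ : σ ∈ Ico0 T)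
    (hξ : ξ ∈ Icc (0 : ℝ) 1) :
    Q₁ σ ξ - Q₂ σ ξ = ∫ s in 0..σ, (u₁ - u₂) (projIcc 0 σ hσ.1 s) := by
  set w : ℝ → ℝ := fun s => (u₁ - u₂) (projIcc 0 σ hσ.1 s)
  have hsub : Icc 0 σ ⊆ Ico0 T := Icc_subset_Ico0 hσ
  have hw : Continuous w :=
    ((h₁.Ncont.sub h₂.Ncont).mono hsub).comp_continuous
      (continuous_subtype_val.comp continuous_projIcc) fun s => (projIcc 0 σ hσ.1 s).2
  set W : ℝ → ℝ := fun τ => ∫ s in 0..τ, w s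
  have hW (τ : ℝ) : HasDerivAt W (w τ) τ := (hw.integral_hasStrictDerivAt 0 τ).hasDerivAt
  have hWc : Continuous W := continuous_iff_continuousAt.2 fun τ => (hW τ).continuousAt
  suffices Q₁ σ ξ - Q₂ σ ξ - W σ = 0 from sub_eq_zero.1 this
  refine eq_zero_of_periodic_transport (P := fun τ η => Q₁ τ η - Q₂ τ η - W τ)
    (R := fun τ η => K (Q₁ τ η) - K (Q₂ τ η)) L.coe_nonneg
    (((h₁.reg.continuousOn.sub h₂.reg.continuousOn).mono (prod_mono_left hsub)).sub
      (hWc.comp continuous_fst).continuousOn)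
    (fun τ hτ => ?_) (fun η hη => by simp [W, h₁.init η hη, h₂.init η hη])
    (fun τ hτ η hη => ?_) (fun τ hτ η _ => ?_) (right_mem_Icc.2 hσ.1) hξ
  · simp only [h₁.bc τ (hsub hτ), h₂.bc τ (hsub hτ), h₁.apply_one hK (hsub hτ),
      h₂.apply_one hK (hsub hτ), sub_self]
  · have hW' : HasDerivWithinAt (fun s : ℝ => W (τ + s)) (w τ) (Icc (-min τ η) 0) 0 :=
      (HasDerivAt.comp_const_add τ 0 (by simpa using hW τ)).hasDerivWithinAt
    refine (((hasDerivWithinAt_characteristic h₁.reg (hsub hτ) hη).fun_sub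
      (hasDerivWithinAt_characteristic h₂.reg (hsub hτ) hη)).fun_sub hW').congr_deriv ?_
    rw [h₁.pde_Icc hK.continuous (hsub hτ) hη, h₂.pde_Icc hK.continuous (hsub hτ) hη]
    simp only [w, projIcc_of_mem hσ.1 hτ, Pi.sub_apply]
    ring
  · refine (hK.dist_le_mul _ _).trans (mul_le_mul_of_nonneg_left ?_ L.coe_nonneg)
    rw [Real.dist_eq, h₁.bc τ (hsub hτ), h₂.bc τ (hsub hτ)]
    simpa using abs_sub (Q₁ τ η - Q₂ τ η - W τ) (0 - 0 - W τ)

theorem eq_of_mem_Icc (h₁ : IsRelaxedSol K ΦF T Qinit Q₁ u₁)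
    (h₂ : IsRelaxedSol K ΦF T Qinit Q₂ u₂) (hK : LipschitzWith L K) {τ η : ℝ} (hτ : τ ∈ Ico0 T)
    (hη : η ∈ Icc (0 : ℝ) 1) : Q₁ τ η = Q₂ τ η := by
  refine sub_eq_zero.1 ((sub_eq_integral h₁ h₂ hK hτ hη).trans ?_)
  rw [← sub_eq_integral h₁ h₂ hK hτ (left_mem_Icc.2 zero_le_one), h₁.bc τ hτ, h₂.bc τ hτ, sub_self]

theorem rate_eq (h₁ : IsRelaxedSol K ΦF T Qinit Q₁ u₁) (h₂ : IsRelaxedSol K ΦF T Qinit Q₂ u₂)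
    (hK : LipschitzWith L K) {τ : ℝ} (hτ : τ ∈ Ico0 T) : u₁ τ = u₂ τ := by
  have heq : EqOn (Q₁ τ) (Q₂ τ) (Icc 0 1) := fun η hη => eq_of_mem_Icc h₁ h₂ hK hτ hη
  rw [h₁.Ndef τ hτ, h₂.Ndef τ hτ, pdEta, pdEta,
    derivWithin_congr heq (heq (right_mem_Icc.2 zero_le_one))]

end IsRelaxedSol

/-- The Q-system in characteristic coordinates, for a response with derivative `k` and a continuous
function `ψ` extending the initial phase profile from `[0, 1]`. The unknown is a pair `(G, q)` of
functions on the circle: `G t (η - t)` stands for `∂_η Q - K(Q)` and `ψ η + q t η` for `Q`, at time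
`t` and position `η`. The values of `G` are truncated to `[m, M]`, which makes the vector field
bounded and globally Lipschitz. -/
structure CharSystem where
  k : ℝ → ℝ
  ψ : ℝ → ℝ
  m : ℝ
  M : ℝ
  C : NNReal
  B : NNReal
  m_le_M : m ≤ M
  lipschitz : LipschitzWith C k
  bound : ∀ x, |k x| ≤ B
  continuous_ψ : Continuous ψ

namespace CharSystem

/-- The phase space of pairs `(G, q)`. -/
abbrev State : Type := C(UnitAddCircle, ℝ) × C(UnitAddCircle, ℝ)

section VectorField

variable (S : CharSystem)

/-- The width `M - m` of the truncation interval. -/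
def width : NNReal := ⟨S.M - S.m, sub_nonneg.2 S.m_le_M⟩

/-- Truncation of a real number to `[m, M]`. -/
def clamp (x : ℝ) : ℝ := projIcc S.m S.M S.m_le_M x

/-- The initial profile on the circle, which jumps at `0` if `ψ 0 ≠ ψ 1`. -/
def profile : UnitAddCircle → ℝ := AddCircle.liftIco 1 0 S.ψ

theorem clamp_mem (x : ℝ) : S.clamp x ∈ Icc S.m S.M := (projIcc S.m S.M S.m_le_M x).2

theorem clamp_of_mem {x : ℝ} (hx : x ∈ Icc S.m S.M) : S.clamp x = x := by
  rw [clamp, projIcc_of_mem S.m_le_M hx]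

theorem lipschitzWith_clamp : LipschitzWith 1 S.clamp :=
  fun x y => LipschitzWith.projIcc S.m_le_M x y

@[fun_prop]
theorem continuous_clamp : Continuous S.clamp := S.lipschitzWith_clamp.continuous

theorem abs_clamp_sub_clamp_le (x y : ℝ) : |S.clamp x - S.clamp y| ≤ S.width :=
  Real.dist_le_of_mem_Icc (S.clamp_mem x) (S.clamp_mem y)

theorem abs_clamp_apply_sub_le (G₁ G₂ : C(UnitAddCircle, ℝ)) (x : UnitAddCircle) :
    |S.clamp (G₁ x) - S.clamp (G₂ x)| ≤ dist G₁ G₂ := by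
  refine (S.lipschitzWith_clamp.dist_le_mul (G₁ x) (G₂ x)).trans ?_
  rw [NNReal.coe_one, one_mul]
  exact ContinuousMap.dist_apply_le_dist x

theorem profile_coe {x : ℝ} (hx : x ∈ Ico (0 : ℝ) 1) : S.profile x = S.ψ x :=
  AddCircle.liftIco_zero_coe_apply hx

theorem continuousAt_profile {θ : UnitAddCircle} (hθ : θ ≠ 0) : ContinuousAt S.profile θ :=
  (S.continuous_ψ.comp continuous_subtype_val).continuousAt.comp
    (AddCircle.continuousAt_equivIco 1 0 (by simpa using hθ))

/- The jump of the profile sits at `x + t = 0`, where the second factor vanishes. -/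
theorem continuous_excessRate (G q : C(UnitAddCircle, ℝ)) :
    Continuous fun p : ℝ × UnitAddCircle =>
      S.k (S.profile (p.2 + p.1) + q (p.2 + p.1)) * (S.clamp (G p.2) - S.clamp (G (-p.1))) := by
  have hadd : Continuous fun p : ℝ × UnitAddCircle => p.2 + (p.1 : UnitAddCircle) := by fun_prop
  have hdiff : Continuous fun p : ℝ × UnitAddCircle => S.clamp (G p.2) - S.clamp (G (-p.1)) := by
    fun_prop
  refine continuous_iff_continuousAt.2 fun ⟨t, x⟩ => ?_
  by_cases hx : x + (t : UnitAddCircle) = 0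
  · have hzero : S.clamp (G x) - S.clamp (G (-t)) = 0 := by
      rw [eq_neg_of_add_eq_zero_left hx, sub_self]
    have hlim : Tendsto (fun p : ℝ × UnitAddCircle =>
        S.B * |S.clamp (G p.2) - S.clamp (G (-p.1))|) (𝓝 (t, x)) (𝓝 0) := by
      simpa [hzero] using (hdiff.abs.tendsto (t, x)).const_mul (S.B : ℝ)
    unfold ContinuousAt
    simp only [hzero, mul_zero]
    refine squeeze_zero_norm (fun p => ?_) hlim
    rw [norm_mul]
    exact mul_le_mul_of_nonneg_right (S.bound _) (abs_nonneg _)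
  · refine ContinuousAt.mul ?_ hdiff.continuousAt
    exact S.lipschitz.continuous.continuousAt.comp
      ((ContinuousAt.comp (f := fun p : ℝ × UnitAddCircle => p.2 + (p.1 : UnitAddCircle))
        (S.continuousAt_profile hx) hadd.continuousAt).add
        (q.continuous.comp hadd).continuousAt)

theorem continuous_dispRate (G : C(UnitAddCircle, ℝ)) :
    Continuous fun p : ℝ × UnitAddCircle => S.clamp (G (-p.1)) - S.clamp (G (p.2 - p.1)) := by
  fun_prop

/-- The `G`-component of the vector field, as a curve in time. -/
def excessRate (G q : C(UnitAddCircle, ℝ)) : C(ℝ, C(UnitAddCircle, ℝ)) :=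
  ContinuousMap.curry ⟨_, S.continuous_excessRate G q⟩

/-- The `q`-component of the vector field, as a curve in time. -/
def dispRate (G : C(UnitAddCircle, ℝ)) : C(ℝ, C(UnitAddCircle, ℝ)) :=
  ContinuousMap.curry ⟨_, S.continuous_dispRate G⟩

/-- The vector field of the system. -/
def field (t : ℝ) (z : State) : State := (S.excessRate z.1 z.2 t, S.dispRate z.1 t)

theorem excessRate_apply (G q : C(UnitAddCircle, ℝ)) (t : ℝ) (x : UnitAddCircle) :
    S.excessRate G q t x =
      S.k (S.profile (x + t) + q (x + t)) * (S.clamp (G x) - S.clamp (G (-t))) :=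
  rfl

theorem dispRate_apply (G : C(UnitAddCircle, ℝ)) (t : ℝ) (x : UnitAddCircle) :
    S.dispRate G t x = S.clamp (G (-t)) - S.clamp (G (x - t)) :=
  rfl

theorem dist_excessRate_le (G₁ G₂ q₁ q₂ : C(UnitAddCircle, ℝ)) (t : ℝ) :
    dist (S.excessRate G₁ q₁ t) (S.excessRate G₂ q₂ t) ≤
      S.C * dist q₁ q₂ * S.width + S.B * (dist G₁ G₂ + dist G₁ G₂) := by
  refine (ContinuousMap.dist_le (by positivity)).2 fun x => ?_
  simp only [excessRate_apply, Real.dist_eq]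
  set κ₁ := S.k (S.profile (x + t) + q₁ (x + t))
  set κ₂ := S.k (S.profile (x + t) + q₂ (x + t))
  set a₁ := S.clamp (G₁ x)
  set a₂ := S.clamp (G₂ x)
  set b₁ := S.clamp (G₁ (-t))
  set b₂ := S.clamp (G₂ (-t))
  have hκ : |κ₁ - κ₂| ≤ S.C * dist q₁ q₂ := by
    refine (S.lipschitz.dist_le_mul _ _).trans ?_
    rw [dist_add_left]
    gcongr
    exact ContinuousMap.dist_apply_le_dist _
  have hab : |(a₁ - a₂) - (b₁ - b₂)| ≤ dist G₁ G₂ + dist G₁ G₂ :=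
    (abs_sub _ _).trans
      (add_le_add (S.abs_clamp_apply_sub_le G₁ G₂ x) (S.abs_clamp_apply_sub_le G₁ G₂ (-t)))
  calc |κ₁ * (a₁ - b₁) - κ₂ * (a₂ - b₂)|
      = |(κ₁ - κ₂) * (a₁ - b₁) + κ₂ * ((a₁ - a₂) - (b₁ - b₂))| := by ring_nf
    _ ≤ |κ₁ - κ₂| * |a₁ - b₁| + |κ₂| * |(a₁ - a₂) - (b₁ - b₂)| := by
        rw [← abs_mul, ← abs_mul]
        exact abs_add_le _ _
    _ ≤ _ := by
        gcongr
        · exact S.abs_clamp_sub_clamp_le _ _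
        · exact S.bound _

theorem dist_dispRate_le (G₁ G₂ : C(UnitAddCircle, ℝ)) (t : ℝ) :
    dist (S.dispRate G₁ t) (S.dispRate G₂ t) ≤ dist G₁ G₂ + dist G₁ G₂ := by
  refine (ContinuousMap.dist_le (by positivity)).2 fun x => ?_
  rw [dispRate_apply, dispRate_apply, Real.dist_eq, sub_sub_sub_comm]
  exact (abs_sub _ _).trans
    (add_le_add (S.abs_clamp_apply_sub_le G₁ G₂ _) (S.abs_clamp_apply_sub_le G₁ G₂ _))

theorem lipschitzWith_field (t : ℝ) :
    LipschitzWith (S.C * S.width + 2 * S.B + 2) (S.field t) := by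
  refine LipschitzWith.of_dist_le_mul fun z w => ?_
  have hG : dist z.1 w.1 ≤ dist z w := le_max_left _ _
  have hq : dist z.2 w.2 ≤ dist z w := le_max_right _ _
  have hle : ∀ d ∈ Icc 0 (dist z w), ∀ e ∈ Icc 0 (dist z w),
      max (S.C * e * S.width + S.B * (d + d)) (d + d) ≤
        (S.C * S.width + 2 * S.B + 2) * dist z w := by
    intro d hd e he
    have h₁ : S.C * S.width * e ≤ S.C * S.width * dist z w := by gcongr; exact he.2
    have h₂ : S.B * d ≤ S.B * dist z w := by gcongr; exact hd.2
    have h₃ : 0 ≤ S.C * S.width * dist z w := by positivity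
    have h₄ : 0 ≤ S.B * dist z w := by positivity
    exact max_le (by linarith [hd.1, hd.2]) (by linarith [hd.2])
  exact (max_le_max (S.dist_excessRate_le z.1 w.1 z.2 w.2 t) (S.dist_dispRate_le z.1 w.1 t)).trans
    (hle _ ⟨dist_nonneg, hG⟩ _ ⟨dist_nonneg, hq⟩)

theorem continuous_field (z : State) : Continuous fun t => S.field t z :=
  (S.excessRate z.1 z.2).continuous.prodMk (S.dispRate z.1).continuous

theorem abs_dispRate_apply_le (G : C(UnitAddCircle, ℝ)) (t : ℝ) (x : UnitAddCircle) :
    |S.dispRate G t x| ≤ S.width :=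
  S.abs_clamp_sub_clamp_le _ _

theorem norm_field_le (t : ℝ) (z : State) : ‖S.field t z‖ ≤ ↑(S.B * S.width + S.width) := by
  rw [NNReal.coe_add, NNReal.coe_mul]
  refine norm_prod_le_iff.2 ⟨(ContinuousMap.norm_le _ (by positivity)).2 fun x => ?_,
    (ContinuousMap.norm_le _ (by positivity)).2 fun x =>
      (S.abs_dispRate_apply_le z.1 t x).trans (le_add_of_nonneg_left (by positivity))⟩
  rw [field, excessRate_apply, Real.norm_eq_abs, abs_mul]
  exact (mul_le_mul (S.bound _) (S.abs_clamp_sub_clamp_le _ _) (abs_nonneg _)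
    S.B.coe_nonneg).trans (le_add_of_nonneg_right S.width.coe_nonneg)

theorem exists_isIntegralCurve_field (z₀ : State) :
    ∃ z : ℝ → State, z 0 = z₀ ∧ IsIntegralCurve z S.field :=
  exists_isIntegralCurve_of_lipschitzWith z₀ S.lipschitzWith_field S.continuous_field
    S.norm_field_le

end VectorField

section IntegralCurve

variable {S : CharSystem} {z : ℝ → State}

theorem hasDerivAt_fst_apply (hz : IsIntegralCurve z S.field) (x : UnitAddCircle) (t : ℝ) :
    HasDerivAt (fun s => (z s).1 x) (S.excessRate (z t).1 (z t).2 t x) t := by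
  have h : HasDerivAt (fun s => (z s).1) (S.excessRate (z t).1 (z t).2 t) t := (hz t).fst
  exact (ContinuousMap.evalCLM ℝ x).hasFDerivAt.comp_hasDerivAt t h

theorem hasDerivAt_snd_apply (hz : IsIntegralCurve z S.field) (x : UnitAddCircle) (t : ℝ) :
    HasDerivAt (fun s => (z s).2 x) (S.dispRate (z t).1 t x) t := by
  have h : HasDerivAt (fun s => (z s).2) (S.dispRate (z t).1 t) t := (hz t).snd
  exact (ContinuousMap.evalCLM ℝ x).hasFDerivAt.comp_hasDerivAt t h

theorem fst_apply_le (hk : ∀ x, S.k x ≤ 0) (hz : IsIntegralCurve z S.field) {x : UnitAddCircle}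
    (h₀ : (z 0).1 x ≤ S.M) {t : ℝ} (ht : 0 ≤ t) : (z t).1 x ≤ S.M := by
  have hderiv := hasDerivAt_fst_apply hz x
  refine le_of_hasDerivWithinAt_nonpos_of_lt (g := fun s => (z s).1 x) (b := t)
    (fun s _ => (hderiv s).continuousAt.continuousWithinAt)
    (fun s _ => (hderiv s).hasDerivWithinAt) h₀ (fun s _ hs => ?_) (right_mem_Icc.2 ht)
  have hclamp : S.clamp ((z s).1 x) = S.M := by rw [clamp, projIcc_of_right_le _ hs.le]
  exact mul_nonpos_of_nonpos_of_nonneg (hk _)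
    (sub_nonneg.2 ((S.clamp_mem _).2.trans hclamp.ge))

theorem le_fst_apply (hk : ∀ x, S.k x ≤ 0) (hz : IsIntegralCurve z S.field) {x : UnitAddCircle}
    (h₀ : S.m ≤ (z 0).1 x) {t : ℝ} (ht : 0 ≤ t) : S.m ≤ (z t).1 x := by
  have hderiv (s : ℝ) := (hasDerivAt_fst_apply hz x s).fun_neg
  refine neg_le_neg_iff.1 (le_of_hasDerivWithinAt_nonpos_of_lt (g := fun s => -(z s).1 x) (b := t)
    (fun s _ => (hderiv s).continuousAt.continuousWithinAt)
    (fun s _ => (hderiv s).hasDerivWithinAt) (neg_le_neg h₀) (fun s _ hs => ?_)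
    (right_mem_Icc.2 ht))
  have hclamp : S.clamp ((z s).1 x) = S.m := by
    rw [clamp, projIcc_of_le_left _ (neg_lt_neg_iff.1 hs).le]
  exact neg_nonpos.2 (mul_nonneg_of_nonpos_of_nonpos (hk _)
    (sub_nonpos.2 (hclamp.le.trans (S.clamp_mem _).1)))

end IntegralCurve

/-- Integral curves starting from `q = 0` along which the truncation is inactive for `t ≥ 0`. -/
structure IsSolution (S : CharSystem) (z : ℝ → State) : Prop where
  isIntegralCurve : IsIntegralCurve z S.field
  snd_zero : (z 0).2 = 0
  mem_Icc : ∀ t, 0 ≤ t → ∀ x, (z t).1 x ∈ Icc S.m S.M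

theorem exists_isSolution (S : CharSystem) (hk : ∀ x, S.k x ≤ 0) {G₀ : C(UnitAddCircle, ℝ)}
    (hG₀ : ∀ x, G₀ x ∈ Icc S.m S.M) : ∃ z : ℝ → State, S.IsSolution z ∧ (z 0).1 = G₀ := by
  obtain ⟨z, hz₀, hz⟩ := S.exists_isIntegralCurve_field (G₀, 0)
  exact ⟨z, ⟨hz, by rw [hz₀], fun t ht x => ⟨le_fst_apply hk hz (by rw [hz₀]; exact (hG₀ x).1) ht,
    fst_apply_le hk hz (by rw [hz₀]; exact (hG₀ x).2) ht⟩⟩, by rw [hz₀]⟩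

end CharSystem

namespace CharSystem

/-- The excess `∂_η Q - K(Q)` of the phase gradient, read off a curve in characteristic
coordinates. -/
def excess (z : ℝ → State) (t η : ℝ) : ℝ := (z t).1 ((η - t : ℝ) : UnitAddCircle)

/-- The phase `Q`, read off a curve in characteristic coordinates. -/
def phase (S : CharSystem) (z : ℝ → State) (t η : ℝ) : ℝ := S.ψ η + (z t).2 (η : UnitAddCircle)

variable {S : CharSystem} {z : ℝ → State} {t η : ℝ}

theorem excess_one (z : ℝ → State) (t : ℝ) : excess z t 1 = excess z t 0 := by
  simp [excess, AddCircle.coe_period]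

theorem phase_sub_phase_zero (S : CharSystem) (z : ℝ → State) (t : ℝ) :
    S.phase z t 1 - S.phase z t 0 = S.ψ 1 - S.ψ 0 := by
  simp [phase, AddCircle.coe_period]

namespace IsSolution

theorem phase_zero (hz : S.IsSolution z) (η : ℝ) : S.phase z 0 η = S.ψ η := by
  simp [phase, hz.snd_zero]

theorem excess_mem_Icc (hz : S.IsSolution z) (ht : 0 ≤ t) (η : ℝ) : excess z t η ∈ Icc S.m S.M :=
  hz.mem_Icc t ht _

theorem continuous_excess (hz : S.IsSolution z) : Continuous (Function.uncurry (excess z)) := by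
  have := hz.isIntegralCurve.continuous
  unfold Function.uncurry excess
  fun_prop

theorem continuous_phase (hz : S.IsSolution z) : Continuous (Function.uncurry (S.phase z)) := by
  have := hz.isIntegralCurve.continuous
  have := S.continuous_ψ
  unfold Function.uncurry phase
  fun_prop

theorem dispRate_coe (hz : S.IsSolution z) (ht : 0 ≤ t) (η : ℝ) :
    S.dispRate (z t).1 t (η : UnitAddCircle) = excess z t 0 - excess z t η := by
  simp only [dispRate_apply, excess, zero_sub, AddCircle.coe_neg, AddCircle.coe_sub,
    S.clamp_of_mem (hz.mem_Icc t ht _)]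

theorem excessRate_coe (hz : S.IsSolution z) (ht : 0 ≤ t) {x : ℝ} (hx : x ∈ Ico (0 : ℝ) 1) :
    S.excessRate (z t).1 (z t).2 t ((x - t : ℝ) : UnitAddCircle) =
      S.k (S.phase z t x) * (excess z t x - excess z t 0) := by
  simp only [excessRate_apply, excess, phase, zero_sub, AddCircle.coe_neg, AddCircle.coe_sub,
    sub_add_cancel, S.profile_coe hx, S.clamp_of_mem (hz.mem_Icc t ht _)]

theorem hasDerivAt_phase (hz : S.IsSolution z) (ht : 0 ≤ t) (η : ℝ) :
    HasDerivAt (fun s => S.phase z s η) (excess z t 0 - excess z t η) t := by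
  rw [← hz.dispRate_coe ht]
  exact (hasDerivAt_snd_apply hz.isIntegralCurve η t).const_add (S.ψ η)

theorem integral_excessRate (hz : S.IsSolution z) (ht : 0 ≤ t) (hη : η ∈ Icc (0 : ℝ) 1) :
    ∫ x in 0..η, S.excessRate (z t).1 (z t).2 t ((x - t : ℝ) : UnitAddCircle) =
      -∫ x in 0..η, S.k (S.phase z t x) * S.dispRate (z t).1 t (x : UnitAddCircle) := by
  rw [← intervalIntegral.integral_neg]
  refine intervalIntegral.integral_congr_ae ?_
  filter_upwards [volume.ae_ne 1] with x hx1 hx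
  rw [uIoc_of_le hη.1] at hx
  rw [hz.excessRate_coe ht ⟨hx.1.le, (hx.2.trans hη.2).lt_of_ne hx1⟩, hz.dispRate_coe ht]
  ring

variable {K : ℝ → ℝ}

theorem hasDerivAt_integral_comp_phase (hz : S.IsSolution z) (hK : ∀ x, HasDerivAt K (S.k x) x)
    (η t : ℝ) :
    HasDerivAt (fun s => ∫ x in 0..η, K (S.phase z s x))
      (∫ x in 0..η, S.k (S.phase z t x) * S.dispRate (z t).1 t (x : UnitAddCircle)) t := by
  have hKc : Continuous K := continuous_iff_continuousAt.2 fun x => (hK x).continuousAt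
  have hkc : Continuous S.k := S.lipschitz.continuous
  have hphase (s : ℝ) : Continuous (S.phase z s) := hz.continuous_phase.uncurry_left s
  refine (intervalIntegral.hasDerivAt_integral_of_dominated_loc_of_deriv_le
    (F := fun s x => K (S.phase z s x))
    (F' := fun s x => S.k (S.phase z s x) * S.dispRate (z s).1 s (x : UnitAddCircle))
    (bound := fun _ => S.B * S.width) univ_mem
    (Eventually.of_forall fun s => (hKc.comp (hphase s)).aestronglyMeasurable)
    ((hKc.comp (hphase t)).intervalIntegrable _ _)
    (Continuous.aestronglyMeasurable (by fun_prop)) ?_ intervalIntegrable_const ?_).2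
  · refine Eventually.of_forall fun x _ s _ => ?_
    rw [norm_mul]
    exact mul_le_mul (S.bound _) (S.abs_dispRate_apply_le _ _ _) (norm_nonneg _) S.B.coe_nonneg
  · exact Eventually.of_forall fun x _ s _ =>
      (hK _).comp s ((hasDerivAt_snd_apply hz.isIntegralCurve x s).const_add (S.ψ x))

theorem hasDerivAt_defect (hz : S.IsSolution z) (hK : ∀ x, HasDerivAt K (S.k x) x)
    (ht : 0 ≤ t) (hη : η ∈ Icc (0 : ℝ) 1) :
    HasDerivAt (fun s => S.phase z s η - (∫ x in 0..η, excess z s x) -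
      ∫ x in 0..η, K (S.phase z s x)) 0 t := by
  have hexcess := hasDerivAt_integral_moving (hz.isIntegralCurve t).fst 0 η
  refine (((hz.hasDerivAt_phase ht η).fun_sub hexcess).fun_sub
    (hz.hasDerivAt_integral_comp_phase hK η t)).congr_deriv ?_
  rw [excess, excess, field, hz.integral_excessRate ht hη]
  ring

theorem phase_eq_integral (hz : S.IsSolution z) (hK : ∀ x, HasDerivAt K (S.k x) x)
    (hη : η ∈ Icc (0 : ℝ) 1)
    (h₀ : S.ψ η = ∫ x in 0..η, (excess z 0 x + K (S.ψ x))) (ht : 0 ≤ t) :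
    S.phase z t η = ∫ x in 0..η, (excess z t x + K (S.phase z t x)) := by
  have hKc : Continuous K := continuous_iff_continuousAt.2 fun x => (hK x).continuousAt
  have hadd (s : ℝ) : ∫ x in 0..η, (excess z s x + K (S.phase z s x)) =
      (∫ x in 0..η, excess z s x) + ∫ x in 0..η, K (S.phase z s x) :=
    intervalIntegral.integral_add
      ((hz.continuous_excess.uncurry_left s).intervalIntegrable _ _)
      ((hKc.comp (hz.continuous_phase.uncurry_left s)).intervalIntegrable _ _)
  have hderiv (s : ℝ) (hs : 0 ≤ s) := hz.hasDerivAt_defect hK hs hη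
  have hconst := constant_of_has_deriv_right_zero
    (fun s hs => (hderiv s hs.1).continuousAt.continuousWithinAt)
    (fun s hs => (hderiv s hs.1).hasDerivWithinAt) t (right_mem_Icc.2 ht)
  have hinit := hadd 0
  simp only [hz.phase_zero] at hconst hinit
  linarith [hadd t]

end IsSolution

end CharSystem

namespace CharSystem.IsSolution

variable {S : CharSystem} {z : ℝ → State} {K : ℝ → ℝ} {t η : ℝ}

theorem hasDerivWithinAt_phase (hz : S.IsSolution z) (hK : ∀ x, HasDerivAt K (S.k x) x)
    (h₀ : ∀ η ∈ Icc (0 : ℝ) 1, S.ψ η = ∫ x in 0..η, (excess z 0 x + K (S.ψ x)))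
    (ht : 0 ≤ t) (hη : η ∈ Icc (0 : ℝ) 1) :
    HasDerivWithinAt (S.phase z t) (excess z t η + K (S.phase z t η)) (Icc 0 1) η := by
  have hKc : Continuous K := continuous_iff_continuousAt.2 fun x => (hK x).continuousAt
  have hcont : Continuous fun x => excess z t x + K (S.phase z t x) :=
    (hz.continuous_excess.uncurry_left t).add (hKc.comp (hz.continuous_phase.uncurry_left t))
  exact (hcont.integral_hasStrictDerivAt 0 η).hasDerivAt.hasDerivWithinAt.congr
    (fun x hx => hz.phase_eq_integral hK hx (h₀ x hx) ht)
    (hz.phase_eq_integral hK hη (h₀ η hη) ht)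

theorem contDiffOn_phase (hz : S.IsSolution z) (hK : ∀ x, HasDerivAt K (S.k x) x)
    (h₀ : ∀ η ∈ Icc (0 : ℝ) 1, S.ψ η = ∫ x in 0..η, (excess z 0 x + K (S.ψ x))) :
    ContDiffOn ℝ 1 (Function.uncurry (S.phase z)) (Ici 0 ×ˢ Icc 0 1) := by
  have hKc : Continuous K := continuous_iff_continuousAt.2 fun x => (hK x).continuousAt
  have hrate : Continuous fun t => excess z t 0 := hz.continuous_excess.uncurry_right 0
  exact contDiffOn_one_uncurry_of_hasDerivWithinAt (a := fun t η => excess z t 0 - excess z t η)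
    (b := fun t η => excess z t η + K (S.phase z t η)) (convex_Ici 0) (uniqueDiffOn_Ici 0)
    (uniqueDiffOn_Icc zero_lt_one)
    ((hrate.comp continuous_fst).sub hz.continuous_excess).continuousOn
    (hz.continuous_excess.add (hKc.comp hz.continuous_phase)).continuousOn
    (fun t ht η _ => (hz.hasDerivAt_phase ht η).hasDerivWithinAt)
    fun t ht η hη => hz.hasDerivWithinAt_phase hK h₀ ht hη

theorem Hinit_phase (hz : S.IsSolution z) (hK : ∀ x, HasDerivAt K (S.k x) x)
    (h₀ : ∀ η ∈ Icc (0 : ℝ) 1, S.ψ η = ∫ x in 0..η, (excess z 0 x + K (S.ψ x)))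
    (ht : 0 ≤ t) (hη : η ∈ Icc (0 : ℝ) 1) : Hinit K (S.phase z t) η = excess z t η := by
  rw [Hinit, (hz.hasDerivWithinAt_phase hK h₀ ht hη).derivWithin
    (uniqueDiffOn_Icc zero_lt_one η hη), add_sub_cancel_right]

theorem isRelaxedSol (hz : S.IsSolution z) (hK : ∀ x, HasDerivAt K (S.k x) x)
    (h₀ : ∀ η ∈ Icc (0 : ℝ) 1, S.ψ η = ∫ x in 0..η, (excess z 0 x + K (S.ψ x)))
    {Qinit : ℝ → ℝ} (hQ : ContDiffOn ℝ 1 Qinit (Icc 0 1)) (hψ : EqOn S.ψ Qinit (Icc 0 1)) :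
    IsRelaxedSol K (Qinit 1) ⊤ Qinit (S.phase z) fun t => excess z t 0 := by
  have hzero : (0 : ℝ) ∈ Icc (0 : ℝ) 1 := left_mem_Icc.2 zero_le_one
  have hone : (1 : ℝ) ∈ Icc (0 : ℝ) 1 := right_mem_Icc.2 zero_le_one
  have hphase₀ {t : ℝ} (ht : 0 ≤ t) : S.phase z t 0 = 0 := by
    rw [hz.phase_eq_integral hK hzero (h₀ 0 hzero) ht, intervalIntegral.integral_same]
  have hphase₁ {t : ℝ} (ht : 0 ≤ t) : S.phase z t 1 = Qinit 1 := by
    rw [← hψ hone]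
    linarith [S.phase_sub_phase_zero z t, hphase₀ ht, hphase₀ le_rfl, hz.phase_zero 0]
  have hpdEta {t η : ℝ} (ht : 0 ≤ t) (hη : η ∈ Icc (0 : ℝ) 1) :
      pdEta (S.phase z) t η = excess z t η + K (S.phase z t η) :=
    eq_add_of_sub_eq (hz.Hinit_phase hK h₀ ht hη)
  refine ⟨hQ, by rw [← hψ hzero, ← hz.phase_zero, hphase₀ le_rfl], rfl,
    by rw [Ico0_top]; exact hz.contDiffOn_phase hK h₀,
    (hz.continuous_excess.uncurry_right 0).continuousOn, fun t ht η hη => ?_,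
    fun t ht => hphase₀ ht.1, fun t ht => ?_, fun η hη => by rw [hz.phase_zero, hψ hη]⟩
  · have hpdTau : pdTau (S.phase z) t η = excess z t 0 - excess z t η :=
      (hz.hasDerivAt_phase ht.1 η).hasDerivWithinAt.derivWithin (uniqueDiffOn_Ici 0 t ht.1)
    rw [hpdTau, hpdEta ht.1 (Ioo_subset_Icc_self hη)]
    ring
  · rw [hpdEta ht.1 hone, hphase₁ ht.1, excess_one, add_sub_cancel_right]

end CharSystem.IsSolution

section Existence

variable {K k : ℝ → ℝ} {Qinit : ℝ → ℝ}

theorem continuousOn_Hinit (hK : Continuous K) (hQ : ContDiffOn ℝ 1 Qinit (Icc 0 1)) :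
    ContinuousOn (Hinit K Qinit) (Icc 0 1) :=
  (hQ.continuousOn_derivWithin (uniqueDiffOn_Icc zero_lt_one) le_rfl).sub
    (hK.comp_continuousOn hQ.continuousOn)

theorem exists_isRelaxedSol {C B : NNReal} {m M : ℝ} (hK : ∀ x, HasDerivAt K (k x) x)
    (hlip : LipschitzWith C k) (hbound : ∀ x, |k x| ≤ B) (hk : ∀ x, k x ≤ 0)
    (hQ : ContDiffOn ℝ 1 Qinit (Icc 0 1)) (hQ₀ : Qinit 0 = 0)
    (hper : Hinit K Qinit 0 = Hinit K Qinit 1)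
    (hH : ∀ η ∈ Icc (0 : ℝ) 1, Hinit K Qinit η ∈ Icc m M) :
    ∃ Q u, IsRelaxedSol K (Qinit 1) ⊤ Qinit Q u ∧
      ∀ τ, 0 ≤ τ → ∀ η ∈ Icc (0 : ℝ) 1, Hinit K (Q τ) η ∈ Icc m M := by
  have hKc : Continuous K := continuous_iff_continuousAt.2 fun x => (hK x).continuousAt
  have hmM : m ≤ M := nonempty_Icc.1 ⟨_, hH 0 (left_mem_Icc.2 zero_le_one)⟩
  let S : CharSystem := ⟨k, IccExtend zero_le_one ((Icc 0 1).domRestrict Qinit), m, M, C, B, hmM,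
    hlip, hbound, hQ.continuousOn.domRestrict.Icc_extend'⟩
  have hψ : EqOn S.ψ Qinit (Icc 0 1) := fun x hx =>
    IccExtend_of_mem zero_le_one ((Icc 0 1).domRestrict Qinit) hx
  let G₀ : C(UnitAddCircle, ℝ) :=
    ⟨AddCircle.liftIco 1 0 (Hinit K Qinit),
      AddCircle.liftIco_zero_continuous hper (continuousOn_Hinit hKc hQ)⟩
  have hG₀ (x : ℝ) (hx : x ∈ Icc (0 : ℝ) 1) : G₀ x = Hinit K Qinit x :=
    liftIco_coe_of_mem_Icc hper hx
  obtain ⟨z, hz, hz₀⟩ := S.exists_isSolution hk (G₀ := G₀) fun x => by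
    obtain ⟨y, hy, rfl⟩ := x.eq_coe_Ico
    rw [hG₀ y (Ico_subset_Icc_self hy)]
    exact hH y (Ico_subset_Icc_self hy)
  have h₀ (η : ℝ) (hη : η ∈ Icc (0 : ℝ) 1) :
      S.ψ η = ∫ x in 0..η, (CharSystem.excess z 0 x + K (S.ψ x)) := by
    have hint := integral_derivWithin_Icc hQ zero_lt_one hη
    rw [hQ₀, sub_zero] at hint
    rw [hψ hη, ← hint]
    refine intervalIntegral.integral_congr fun x hx => ?_
    rw [uIcc_of_le hη.1] at hx
    have hx' : x ∈ Icc (0 : ℝ) 1 := ⟨hx.1, hx.2.trans hη.2⟩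
    simp only [CharSystem.excess, sub_zero, hz₀, hG₀ x hx', hψ hx', Hinit, sub_add_cancel]
  refine ⟨_, _, hz.isRelaxedSol hK h₀ hQ hψ, fun τ hτ η hη => ?_⟩
  rw [hz.Hinit_phase hK h₀ hτ hη]
  exact hz.excess_mem_Icc hτ η

end Existence

section AffineExtension

variable {K : ℝ → ℝ} {a b : ℝ} {L : NNReal}

/-- The extension of `K` from `[a, b]` to `ℝ` that is affine outside `[a, b]` with the slopes
`K' a` and `K' b`, written as the primitive of `K'` frozen beyond the endpoints. It turns bounds on
`K'` over `[a, b]` into bounds over `ℝ`. -/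
def affineExtension (K : ℝ → ℝ) (hab : a ≤ b) (x : ℝ) : ℝ :=
  K a + ∫ y in a..x, deriv K (projIcc a b hab y)

theorem hasDerivAt_affineExtension (hK : Continuous (deriv K)) (hab : a ≤ b) (x : ℝ) :
    HasDerivAt (affineExtension K hab) (deriv K (projIcc a b hab x)) x :=
  ((hK.comp (continuous_subtype_val.comp continuous_projIcc)).integral_hasStrictDerivAt a
    x).hasDerivAt.const_add _

theorem eqOn_affineExtension (hK : ContDiff ℝ 1 K) (hab : a ≤ b) :
    EqOn (affineExtension K hab) K (Icc a b) := by
  intro x hx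
  have hfrozen : ∫ y in a..x, deriv K (projIcc a b hab y) = ∫ y in a..x, deriv K y := by
    refine intervalIntegral.integral_congr fun y hy => ?_
    rw [uIcc_of_le hx.1] at hy
    simp only [projIcc_of_mem hab (Icc_subset_Icc_right hx.2 hy)]
  rw [affineExtension, hfrozen, intervalIntegral.integral_deriv_eq_sub
    (fun y _ => hK.differentiable one_ne_zero y)
    ((hK.continuous_deriv le_rfl).intervalIntegrable a x), add_sub_cancel]

theorem lipschitzWith_affineExtension (hK : LipschitzWith L K) (hK' : Continuous (deriv K))
    (hab : a ≤ b) : LipschitzWith L (affineExtension K hab) :=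
  lipschitzWith_of_nnnorm_deriv_le
    (fun x => (hasDerivAt_affineExtension hK' hab x).differentiableAt) fun x => by
      rw [(hasDerivAt_affineExtension hK' hab x).deriv]
      exact norm_deriv_le_of_lipschitz hK

end AffineExtension

namespace KAssump

variable {K : ℝ → ℝ} {ΦF : ℝ}

theorem exists_lipschitzWith (hK : KAssump K ΦF) : ∃ L, LipschitzWith L K := by
  obtain ⟨C, hC⟩ := hK.bdd1
  exact ⟨⟨C, (abs_nonneg _).trans (hC 0)⟩,
    lipschitzWith_of_nnnorm_deriv_le (hK.smooth.differentiable two_ne_zero) hC⟩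

theorem exists_lipschitzWith_deriv (hK : KAssump K ΦF) : ∃ L, LipschitzWith L (deriv K) := by
  obtain ⟨C, hC⟩ := hK.bdd2
  exact ⟨⟨C, (abs_nonneg _).trans (hC 0)⟩,
    lipschitzWith_of_nnnorm_deriv_le (hK.smooth.differentiable_deriv_two) hC⟩

end KAssump

section QSystem

variable {K Kt : ℝ → ℝ} {ΦF : ℝ} {T : ℝ≥0∞} {Qinit : ℝ → ℝ} {Q Q₁ Q₂ : ℝ → ℝ → ℝ}
  {u N N₁ N₂ : ℝ → ℝ} {L : NNReal} {τ η : ℝ}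

namespace IsRelaxedSol

theorem Hinit_one (h : IsRelaxedSol K ΦF T Qinit Q u) (hK : LipschitzWith L K)
    (hτ : τ ∈ Ico0 T) : Hinit K (Q τ) 1 = u τ := by
  rw [h.Ndef τ hτ, Hinit, h.apply_one hK hτ, pdEta]

theorem monotoneOn (h : IsRelaxedSol K ΦF T Qinit Q u) (hK : LipschitzWith L K)
    (hanti : Antitone K) (hpos : 0 ≤ K ΦF) (hτ : τ ∈ Ico0 T)
    (hH : ∀ η ∈ Icc (0 : ℝ) 1, 0 < Hinit K (Q τ) η) : MonotoneOn (Q τ) (Icc 0 1) :=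
  monotoneOn_of_deriv_pos_of_le (fun η hη => hasDerivWithinAt_pdEta h.reg hτ hη) fun η hη hle => by
    rw [h.apply_one hK hτ] at hle
    have hHη : 0 < pdEta Q τ η - K (Q τ η) := hH η hη
    linarith [hanti hle]

theorem mapsTo_Icc (h : IsRelaxedSol K ΦF T Qinit Q u) (hK : LipschitzWith L K)
    (hτ : τ ∈ Ico0 T) (hmono : MonotoneOn (Q τ) (Icc 0 1)) :
    MapsTo (Q τ) (Icc 0 1) (Icc 0 ΦF) := by
  have hmaps := hmono.mapsTo_Icc
  rwa [h.bc τ hτ, h.apply_one hK hτ] at hmaps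

theorem congr_of_mapsTo (h : IsRelaxedSol K ΦF T Qinit Q u) (hKt : EqOn K Kt (Icc 0 ΦF))
    (hΦF : 0 ≤ ΦF) (hmaps : ∀ τ ∈ Ico0 T, MapsTo (Q τ) (Icc 0 1) (Icc 0 ΦF)) :
    IsRelaxedSol Kt ΦF T Qinit Q u where
  __ := h
  pde τ hτ η hη := by
    rw [h.pde τ hτ η hη, hKt (hmaps τ hτ (Ioo_subset_Icc_self hη))]
  Ndef τ hτ := by rw [h.Ndef τ hτ, hKt (right_mem_Icc.2 hΦF)]

theorem isQSol (h : IsRelaxedSol K ΦF T Qinit Q u) (hA2 : A2 K ΦF Qinit)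
    (hmono : ∀ τ ∈ Ico0 T, MonotoneOn (Q τ) (Icc 0 1)) (hu : ∀ τ ∈ Ico0 T, 0 < u τ) :
    IsQSol K ΦF T Qinit Q fun τ => 1 / u τ where
  __ := h
  initMono := hA2.mono
  initDeriv := hA2.deriv1
  mono := hmono
  Ncont := continuousOn_const.div h.Ncont fun τ hτ => (hu τ hτ).ne'
  Npos τ hτ := one_div_pos.2 (hu τ hτ)
  pde τ hτ η hη := by rw [one_div_one_div, h.pde τ hτ η hη]
  Ndef τ hτ := by rw [one_div_one_div, h.Ndef τ hτ]
  constraint τ hτ := sub_pos.1 ((hu τ hτ).trans_eq (h.Ndef τ hτ))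

end IsRelaxedSol

namespace IsQSol

theorem isRelaxedSol (h : IsQSol K ΦF T Qinit Q N) :
    IsRelaxedSol K ΦF T Qinit Q fun τ => 1 / N τ where
  __ := h
  Ncont := continuousOn_const.div h.Ncont fun τ hτ => (h.Npos τ hτ).ne'

theorem eq_of_mem_Icc (h₁ : IsQSol K ΦF T Qinit Q₁ N₁) (h₂ : IsQSol K ΦF T Qinit Q₂ N₂)
    (hK : LipschitzWith L K) (hτ : τ ∈ Ico0 T) (hη : η ∈ Icc (0 : ℝ) 1) : Q₁ τ η = Q₂ τ η :=
  h₁.isRelaxedSol.eq_of_mem_Icc h₂.isRelaxedSol hK hτ hη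

theorem rate_eq (h₁ : IsQSol K ΦF T Qinit Q₁ N₁) (h₂ : IsQSol K ΦF T Qinit Q₂ N₂)
    (hK : LipschitzWith L K) (hτ : τ ∈ Ico0 T) : N₁ τ = N₂ τ := by
  have hinv : 1 / N₁ τ = 1 / N₂ τ := h₁.isRelaxedSol.rate_eq h₂.isRelaxedSol hK hτ
  rwa [one_div, one_div, inv_inj] at hinv

end IsQSol

theorem A2.mapsTo_Icc (hA2 : A2 K ΦF Qinit) : MapsTo Qinit (Icc 0 1) (Icc 0 ΦF) := by
  have hmaps := hA2.mono.mapsTo_Icc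
  rwa [hA2.init0, hA2.init1] at hmaps

theorem A2.congr_of_eqOn (hA2 : A2 K ΦF Qinit) (hΦF : 0 ≤ ΦF) (hKt : EqOn K Kt (Icc 0 ΦF)) :
    A2 Kt ΦF Qinit where
  __ := hA2
  deriv1 := hKt (right_mem_Icc.2 hΦF) ▸ hA2.deriv1
  compat := by
    rw [hA2.compat, hKt (right_mem_Icc.2 hΦF), hKt (left_mem_Icc.2 hΦF)]

theorem A2.Hinit_zero (hA2 : A2 K ΦF Qinit) : Hinit K Qinit 0 = Hinit K Qinit 1 := by
  rw [Hinit, Hinit, hA2.init0, hA2.init1]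
  linarith [hA2.compat]

theorem exists_isRelaxedSol_monotoneOn {k : ℝ → ℝ} {C B : NNReal} {m M : ℝ} (hm : 0 < m)
    (hK : ∀ x, HasDerivAt K (k x) x) (hlip : LipschitzWith C k) (hbound : ∀ x, |k x| ≤ B)
    (hk : ∀ x, k x ≤ 0) (hpos : 0 ≤ K ΦF) (hA2 : A2 K ΦF Qinit)
    (hH : ∀ η ∈ Icc (0 : ℝ) 1, Hinit K Qinit η ∈ Icc m M) :
    ∃ Q u, IsRelaxedSol K ΦF ⊤ Qinit Q u ∧
      ∀ τ ∈ Ico0 ⊤, MonotoneOn (Q τ) (Icc 0 1) ∧ u τ ∈ Icc m M := by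
  obtain ⟨Q, u, hsol, hQH⟩ :=
    exists_isRelaxedSol hK hlip hbound hk hA2.reg hA2.init0 hA2.Hinit_zero hH
  rw [hA2.init1] at hsol
  have hKlip : LipschitzWith B K :=
    lipschitzWith_of_nnnorm_deriv_le (fun x => (hK x).differentiableAt) fun x => by
      rw [(hK x).deriv]
      exact hbound x
  refine ⟨Q, u, hsol, fun τ hτ => ⟨?_, ?_⟩⟩
  · exact hsol.monotoneOn hKlip (antitone_of_hasDerivAt_nonpos hK hk) hpos hτ fun η hη =>
      hm.trans_le (hQH τ hτ.1 η hη).1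
  · exact hsol.Hinit_one hKlip hτ ▸ hQH τ hτ.1 1 (right_mem_Icc.2 zero_le_one)

theorem exists_isQSol (hΦF : 0 ≤ ΦF) (hK : KAssump K ΦF)
    (hK' : ∀ φ ∈ Icc (0 : ℝ) ΦF, deriv K φ ≤ 0) (hA2 : A2 K ΦF Qinit) {m M : ℝ} (hm : 0 < m)
    (hH : ∀ η ∈ Icc (0 : ℝ) 1, Hinit K Qinit η ∈ Icc m M) :
    ∃ (Q : ℝ → ℝ → ℝ) (u : ℝ → ℝ), IsQSol K ΦF ⊤ Qinit Q (fun τ => 1 / u τ) ∧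
      ∀ τ ∈ Ico0 ⊤, u τ ∈ Icc m M := by
  obtain ⟨L, hL⟩ := hK.exists_lipschitzWith
  obtain ⟨C, hC⟩ := hK.exists_lipschitzWith_deriv
  have hKt : EqOn K (affineExtension K hΦF) (Icc 0 ΦF) :=
    (eqOn_affineExtension (hK.smooth.of_le one_le_two) hΦF).symm
  have hend : ΦF ∈ Icc 0 ΦF := right_mem_Icc.2 hΦF
  obtain ⟨Q, u, hsol, hQu⟩ := exists_isRelaxedSol_monotoneOn (ΦF := ΦF) hm
    (hasDerivAt_affineExtension hC.continuous hΦF)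
    (hC.comp ((LipschitzWith.subtype_val _).comp (LipschitzWith.projIcc hΦF)))
    (fun x => norm_deriv_le_of_lipschitz hL) (fun x => hK' _ (projIcc 0 ΦF hΦF x).2)
    (hKt hend ▸ (hK.pos ΦF hend).le) (hA2.congr_of_eqOn hΦF hKt) fun η hη => by
      rw [Hinit, ← hKt (hA2.mapsTo_Icc hη)]
      exact hH η hη
  have hmaps (τ : ℝ) (hτ : τ ∈ Ico0 ⊤) : MapsTo (Q τ) (Icc 0 1) (Icc 0 ΦF) :=
    hsol.mapsTo_Icc (lipschitzWith_affineExtension hL hC.continuous hΦF) hτ (hQu τ hτ).1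
  exact ⟨Q, u, (hsol.congr_of_mapsTo hKt.symm hΦF hmaps).isQSol hA2 (fun τ hτ => (hQu τ hτ).1)
    fun τ hτ => hm.trans_le (hQu τ hτ).2.1, fun τ hτ => (hQu τ hτ).2⟩

end QSystem

/-- Theorem 5.1: global existence and uniform firing-rate bounds for `K' ≤ 0` and mild
interaction (`H_init > 0`). -/
theorem stmt13 (ΦF : ℝ) (hΦF : 0 < ΦF) (K : ℝ → ℝ) (hK : KAssump K ΦF)
    (hK' : ∀ φ ∈ Icc (0 : ℝ) ΦF, deriv K φ ≤ 0)
    (Qinit : ℝ → ℝ) (hA2 : A2 K ΦF Qinit)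
    (hH : ∀ η ∈ Icc (0 : ℝ) 1, 0 < Hinit K Qinit η) :
    ∃ (Q : ℝ → ℝ → ℝ) (N : ℝ → ℝ),
      IsQSol K ΦF ⊤ Qinit Q N ∧
      (∀ (Q' : ℝ → ℝ → ℝ) (N' : ℝ → ℝ), IsQSol K ΦF ⊤ Qinit Q' N' →
        (∀ τ : ℝ, 0 ≤ τ → ∀ η ∈ Icc (0 : ℝ) 1, Q' τ η = Q τ η) ∧
        (∀ τ : ℝ, 0 ≤ τ → N' τ = N τ)) ∧
      ∀ τ : ℝ, 0 ≤ τ →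
        0 < 1 / sSup (Hinit K Qinit '' Icc (0 : ℝ) 1) ∧
        1 / sSup (Hinit K Qinit '' Icc (0 : ℝ) 1) ≤ N τ ∧
        N τ ≤ 1 / sInf (Hinit K Qinit '' Icc (0 : ℝ) 1) := by
  have hcont : ContinuousOn (Hinit K Qinit) (Icc 0 1) :=
    continuousOn_Hinit hK.smooth.continuous hA2.reg
  have hcompact := isCompact_Icc.image_of_continuousOn hcont
  have hinf_pos := sInf_image_pos_of_isCompact isCompact_Icc (nonempty_Icc.2 zero_le_one) hcont hH
  obtain ⟨Q, u, hsol, hu⟩ := exists_isQSol hΦF.le hK hK' hA2 hinf_pos fun η hη =>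
    ⟨csInf_le hcompact.bddBelow (mem_image_of_mem _ hη),
      le_csSup hcompact.bddAbove (mem_image_of_mem _ hη)⟩
  obtain ⟨L, hL⟩ := hK.exists_lipschitzWith
  have hmem {τ : ℝ} (hτ : 0 ≤ τ) : τ ∈ Ico0 ⊤ := Ico0_top ▸ hτ
  refine ⟨Q, fun τ => 1 / u τ, hsol, fun Q' N' hsol' =>
    ⟨fun τ hτ η hη => hsol'.eq_of_mem_Icc hsol hL (hmem hτ) hη,
      fun τ hτ => hsol'.rate_eq hsol hL (hmem hτ)⟩, fun τ hτ => ?_⟩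
  obtain ⟨hinf_le, hle_sup⟩ := hu τ (hmem hτ)
  have hu_pos : 0 < u τ := hinf_pos.trans_le hinf_le
  exact ⟨one_div_pos.2 (hu_pos.trans_le hle_sup), one_div_le_one_div_of_le hu_pos hle_sup,
    one_div_le_one_div_of_le hinf_pos hinf_le⟩
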